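/- Assume b₀ − 2b₁ > 0 and b₀ + (m−2)b₁ > 0, so that M₀ is positive definite. Then for every design measure w, det M(w) ≤ det M₀, and if det M(w) = det M₀ then M(w) = M₀. (Implication (iii) of Theorem 1: any D-optimal design measure has moment matrix M₀.) -/

import Mathlib

open Matrix Finset

namespace OofA

/-- The index set `S` of pairs `(i,j)` with `i < j`. -/
abbrev Pairs (m : ℕ) := {ij : Fin m × Fin m // ij.1 < ij.2}

/-- `z_{ij}(a)`: for a treatment `a` (a permutation, `a k` being the component placed at
position `k`), this equals `c h` where `h` is the distance between the positions of the
components `i` and `j` in `a`, with sign `+` if `i` precedes `j` and `-` otherwise. -/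
noncomputable def z {m : ℕ} (c : ℕ → ℝ) (a : Equiv.Perm (Fin m)) (ij : Pairs m) : ℝ :=
  if (a.symm ij.1.1 : ℕ) < (a.symm ij.1.2 : ℕ) then
    c (Nat.dist (a.symm ij.1.1 : ℕ) (a.symm ij.1.2 : ℕ))
  else
    -c (Nat.dist (a.symm ij.1.1 : ℕ) (a.symm ij.1.2 : ℕ))

/-- The vector `x(a) = (1, z(a)ᵀ)ᵀ ∈ ℝ^p`, indexed by `Unit ⊕ Pairs m`. -/
noncomputable def x {m : ℕ} (c : ℕ → ℝ) (a : Equiv.Perm (Fin m)) : (Unit ⊕ Pairs m) → ℝ :=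
  Sum.elim (fun _ => (1 : ℝ)) (z c a)

/-- The moment matrix `M(w) = Σ_a w(a) x(a) x(a)ᵀ` of a design measure `w`. -/
noncomputable def momentMatrix {m : ℕ} (c : ℕ → ℝ) (w : Equiv.Perm (Fin m) → ℝ) :
    Matrix (Unit ⊕ Pairs m) (Unit ⊕ Pairs m) ℝ :=
  ∑ a : Equiv.Perm (Fin m), w a • Matrix.vecMulVec (x c a) (x c a)

/-- The moment matrix `M₀` of the uniform design measure `w₀(a) = 1/m!`. -/
noncomputable def M0 (m : ℕ) (c : ℕ → ℝ) : Matrix (Unit ⊕ Pairs m) (Unit ⊕ Pairs m) ℝ :=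
  momentMatrix c (fun _ => 1 / (Nat.factorial m : ℝ))

/-- A signed permutation matrix: exactly one nonzero entry in each row and in each column,
each nonzero entry being `1` or `-1`. -/
def IsSignedPerm {n : Type*} [Fintype n] (R : Matrix n n ℝ) : Prop :=
  (∀ i, ∃! j, R i j ≠ 0) ∧ (∀ j, ∃! i, R i j ≠ 0) ∧
    (∀ i j, R i j ≠ 0 → R i j = 1 ∨ R i j = -1)

/-- `b₀ = (2/(m(m−1))) Σ_{h=1}^{m−1} (m−h) c_h²`. -/
noncomputable def b0 (m : ℕ) (c : ℕ → ℝ) : ℝ :=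
  (2 / ((m : ℝ) * ((m : ℝ) - 1))) *
    ∑ h ∈ Finset.Icc 1 (m - 1), ((m : ℝ) - (h : ℝ)) * (c h) ^ 2

/-- `b₁ = (2/(m(m−1)(m−2))) Σ (m−h₁−h₂) c_{h₁} (2c_{h₁+h₂} − c_{h₂})`,
summed over `h₁, h₂ ≥ 1` with `h₁ + h₂ ≤ m − 1`. -/
noncomputable def b1 (m : ℕ) (c : ℕ → ℝ) : ℝ :=
  (2 / ((m : ℝ) * ((m : ℝ) - 1) * ((m : ℝ) - 2))) *
    ∑ h1 ∈ Finset.Icc 1 (m - 1), ∑ h2 ∈ Finset.Icc 1 (m - 1 - h1),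
      ((m : ℝ) - (h1 : ℝ) - (h2 : ℝ)) * c h1 * (2 * c (h1 + h2) - c h2)

/-- The `q × q` matrix `V` of (7). -/
noncomputable def V (m : ℕ) : Matrix (Pairs m) (Pairs m) ℝ := fun ij kl =>
  if (ij.1.1 = kl.1.1 ∧ ij.1.2 ≠ kl.1.2) ∨ (ij.1.1 ≠ kl.1.1 ∧ ij.1.2 = kl.1.2) then 1
  else if ij.1.1 = kl.1.2 ∨ ij.1.2 = kl.1.1 then -1
  else 0

open scoped MatrixOrder in
lemma amgm {n : Type*} [Fintype n] [DecidableEq n] (A M : Matrix n n ℝ) (hA : A.PosDef)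
    (hM : M.PosSemidef) (htr : (A⁻¹ * M).trace = Fintype.card n) :
    M.det ≤ A.det ∧ (M.det = A.det → M = A) := by
  obtain ⟨B, hB⟩ := CStarAlgebra.nonneg_iff_eq_star_mul_self.mp hA.posSemidef.nonneg
  have hdA := hA.det_pos
  rw [Matrix.star_eq_conjTranspose] at hB
  have hdet : A.det = B.det * B.det := by
    rw [hB, det_mul, det_conjTranspose]; simp
  have hBu : IsUnit B.det := by
    rw [isUnit_iff_ne_zero]; intro h; rw [hdet, h] at hdA; simp at hdA
  have hBtu : IsUnit Bᴴ.det := by rw [det_conjTranspose]; simpa using hBu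
  set N := (B⁻¹)ᴴ * M * B⁻¹ with hN
  have hNps : N.PosSemidef := hM.conjTranspose_mul_mul_same _
  have hMN : M = Bᴴ * N * B := by
    rw [hN, conjTranspose_nonsing_inv]
    simp only [← Matrix.mul_assoc]
    rw [Matrix.mul_nonsing_inv _ hBtu, Matrix.one_mul, Matrix.mul_assoc,
      Matrix.nonsing_inv_mul _ hBu, Matrix.mul_one]
  have hMd : M.det = A.det * N.det := by
    rw [hMN, hdet, det_mul, det_mul, det_conjTranspose]; simp; ring
  have htN : N.trace = Fintype.card n := by
    rw [← htr, hN, Matrix.trace_mul_comm, ← Matrix.mul_assoc, hB, Matrix.mul_inv_rev,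
      conjTranspose_nonsing_inv]
  set l := hNps.1.eigenvalues with hl
  have hl0 : ∀ i, 0 ≤ l i := hNps.eigenvalues_nonneg
  have hNd : N.det = ∏ i, l i := by
    rw [hNps.1.det_eq_prod_eigenvalues]; simp [hl]
  have hsum : ∑ i, (l i - 1) = 0 := by
    have := hNps.1.trace_eq_sum_eigenvalues
    rw [htN] at this
    rw [Finset.sum_sub_distrib]; simp [hl]; simp at this; linarith
  have hexp : ∏ i, Real.exp (l i - 1) = 1 := by
    rw [← Real.exp_sum, hsum, Real.exp_zero]
  have hle : ∀ i, l i ≤ Real.exp (l i - 1) := fun i => by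
    linarith [Real.add_one_le_exp (l i - 1)]
  have hN1 : N.det ≤ 1 := by
    rw [hNd, ← hexp]
    exact Finset.prod_le_prod (fun i _ => hl0 i) (fun i _ => hle i)
  refine ⟨by rw [hMd]; nlinarith, fun h => ?_⟩
  have hN2 : ∏ i, l i = 1 := by
    rw [← hNd]; rw [hMd] at h
    exact mul_left_cancel₀ hdA.ne' (by linarith)
  have hall : ∀ i, l i = 1 := by
    by_contra hcon
    push Not at hcon
    obtain ⟨i, hi⟩ := hcon
    have : ∏ i, l i < ∏ i, Real.exp (l i - 1) := by
      refine Finset.prod_lt_prod (fun j _ => ?_) (fun j _ => hle j) ⟨i, Finset.mem_univ _, ?_⟩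
      · refine lt_of_le_of_ne (hl0 j) fun h0 => ?_
        rw [Finset.prod_eq_zero (Finset.mem_univ j) h0.symm] at hN2
        norm_num at hN2
      · linarith [Real.add_one_lt_exp (sub_ne_zero.mpr hi)]
    linarith
  have hNone : N = 1 := by
    rw [hNps.1.spectral_theorem]
    have : (RCLike.ofReal ∘ hNps.1.eigenvalues : n → ℝ) = fun _ => 1 := by
      funext i; simpa using hall i
    rw [this, Matrix.diagonal_one, map_one]
  rw [hMN, hNone, Matrix.mul_one, hB]

noncomputable def sg (c : ℕ → ℝ) (p q : ℕ) : ℝ :=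
  if p < q then c (q - p) else if q < p then -c (p - q) else 0

lemma sg_anti (c : ℕ → ℝ) (p q : ℕ) : sg c q p = - sg c p q := by
  unfold sg
  rcases lt_trichotomy p q with h | h | h
  · simp [h, h.not_gt]
  · simp [h]
  · simp [h, h.not_gt]

lemma z_eq {m : ℕ} (c : ℕ → ℝ) (a : Equiv.Perm (Fin m)) (ij : Pairs m) :
    z c a ij = sg c (a.symm ij.1.1) (a.symm ij.1.2) := by
  have hne : (a.symm ij.1.1 : ℕ) ≠ a.symm ij.1.2 := by
    intro h
    exact ij.2.ne (a.symm.injective (Fin.ext h))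
  unfold z sg
  rcases lt_or_gt_of_ne hne with h | h
  · simp [h, Nat.dist_eq_sub_of_le h.le]
  · simp [h, h.not_gt, Nat.dist_eq_sub_of_le_right h.le]

noncomputable def R {m : ℕ} (g : Equiv.Perm (Fin m)) :
    Matrix (Unit ⊕ Pairs m) (Unit ⊕ Pairs m) ℝ :=
  Matrix.fromBlocks 1 0 0 (Matrix.of fun ij kl =>
    if g.symm ij.1.1 = kl.1.1 ∧ g.symm ij.1.2 = kl.1.2 then 1
    else if g.symm ij.1.1 = kl.1.2 ∧ g.symm ij.1.2 = kl.1.1 then -1 else 0)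

lemma R_x {m : ℕ} (c : ℕ → ℝ) (g a : Equiv.Perm (Fin m)) :
    R g *ᵥ x c a = x c (g * a) := by
  unfold R x
  rw [Matrix.fromBlocks_mulVec]
  funext k
  rcases k with k | ij
  · simp
  · simp only [Sum.elim_comp_inl, Sum.elim_comp_inr, Sum.elim_inr, Matrix.zero_mulVec,
      zero_add]
    have hs : ∀ i, (g * a).symm i = a.symm (g.symm i) := fun i => rfl
    rw [z_eq, hs, hs]
    obtain ⟨⟨i, j⟩, hij⟩ := ij
    have hne : g.symm i ≠ g.symm j := fun h => hij.ne (g.symm.injective h)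
    simp only [Matrix.mulVec, dotProduct, Matrix.of_apply]
    rcases lt_or_gt_of_ne hne with h | h
    · rw [Finset.sum_eq_single (⟨(g.symm i, g.symm j), h⟩ : Pairs m)]
      · simp [z_eq]
      · rintro ⟨⟨k, l⟩, hkl⟩ _ hn
        have h1 : ¬ (g.symm i = k ∧ g.symm j = l) := by
          rintro ⟨rfl, rfl⟩; exact hn rfl
        have h2 : ¬ (g.symm i = l ∧ g.symm j = k) := by
          rintro ⟨rfl, rfl⟩; exact absurd h (not_lt.mpr (le_of_lt hkl))
        simp only [h1, h2, if_false, zero_mul]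
      · simp
    · rw [Finset.sum_eq_single (⟨(g.symm j, g.symm i), h⟩ : Pairs m)]
      · simp [z_eq, hne, sg_anti c (a.symm (g.symm i))]
      · rintro ⟨⟨k, l⟩, hkl⟩ _ hn
        have h1 : ¬ (g.symm i = k ∧ g.symm j = l) := by
          rintro ⟨rfl, rfl⟩; exact absurd h (not_lt.mpr (le_of_lt hkl))
        have h2 : ¬ (g.symm i = l ∧ g.symm j = k) := by
          rintro ⟨rfl, rfl⟩; exact hn rfl
        simp only [h1, h2, if_false, zero_mul]
      · simp

lemma R_M0 {m : ℕ} (c : ℕ → ℝ) (g : Equiv.Perm (Fin m)) :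
    R g * M0 m c * (R g)ᵀ = M0 m c := by
  unfold M0 momentMatrix
  rw [Finset.mul_sum, Finset.sum_mul]
  refine Fintype.sum_equiv (Equiv.mulLeft g) _ _ fun a => ?_
  rw [Matrix.mul_smul, Matrix.smul_mul, Matrix.mul_vecMulVec, Matrix.vecMulVec_mul,
    Matrix.vecMul_transpose, R_x]
  rfl

lemma d_inv {m : ℕ} (c : ℕ → ℝ) (g a : Equiv.Perm (Fin m)) (h : IsUnit (M0 m c).det) :
    x c (g * a) ⬝ᵥ ((M0 m c)⁻¹ *ᵥ x c (g * a)) = x c a ⬝ᵥ ((M0 m c)⁻¹ *ᵥ x c a) := by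
  have h1 := R_M0 c g
  have hR : IsUnit (R g).det := by
    rw [isUnit_iff_ne_zero] at h ⊢
    intro h0
    have := congrArg Matrix.det h1
    rw [det_mul, det_mul, h0] at this
    simp at this
    exact h this.symm
  have hRt : IsUnit (R g)ᵀ.det := by rwa [det_transpose]
  have h2 : (R g)ᵀ * (M0 m c)⁻¹ * R g = (M0 m c)⁻¹ := by
    conv_lhs => rw [← h1]
    rw [Matrix.mul_inv_rev, Matrix.mul_inv_rev]
    simp only [← Matrix.mul_assoc]
    rw [Matrix.mul_nonsing_inv _ hRt, Matrix.one_mul, Matrix.mul_assoc,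
      Matrix.nonsing_inv_mul _ hR, Matrix.mul_one]
  rw [← R_x]
  conv_rhs => rw [← h2]
  rw [← Matrix.mulVec_mulVec, ← Matrix.mulVec_mulVec, Matrix.dotProduct_mulVec (x c a),
    Matrix.vecMul_transpose]

lemma trace_eq {m : ℕ} (c : ℕ → ℝ) (A : Matrix (Unit ⊕ Pairs m) (Unit ⊕ Pairs m) ℝ)
    (w : Equiv.Perm (Fin m) → ℝ) :
    (A * momentMatrix c w).trace = ∑ a, w a * (x c a ⬝ᵥ (A *ᵥ x c a)) := by
  unfold momentMatrix
  rw [Finset.mul_sum, Matrix.trace_sum]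
  refine Finset.sum_congr rfl fun a _ => ?_
  rw [Matrix.mul_smul, Matrix.trace_smul, Matrix.mul_vecMulVec, Matrix.trace_vecMulVec,
    dotProduct_comm, smul_eq_mul]

lemma quad {m : ℕ} (c : ℕ → ℝ) (w : Equiv.Perm (Fin m) → ℝ) (v : Unit ⊕ Pairs m → ℝ) :
    v ⬝ᵥ (momentMatrix c w *ᵥ v) = ∑ a, w a * (v ⬝ᵥ x c a) ^ 2 := by
  unfold momentMatrix
  rw [Matrix.sum_mulVec, dotProduct_sum]
  refine Finset.sum_congr rfl fun a _ => ?_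
  rw [Matrix.smul_mulVec, Matrix.vecMulVec_mulVec, dotProduct_smul, dotProduct_smul]
  simp [dotProduct_comm (x c a) v]
  left; ring

lemma herm {m : ℕ} (c : ℕ → ℝ) (w : Equiv.Perm (Fin m) → ℝ) :
    (momentMatrix c w).IsHermitian := by
  ext i j
  simp [momentMatrix, Matrix.sum_apply, Matrix.vecMulVec_apply, mul_comm]

lemma main_of_posDef {m : ℕ} (c : ℕ → ℝ) (hpd : (M0 m c).PosDef)
    (w : Equiv.Perm (Fin m) → ℝ) (hw0 : ∀ a, 0 ≤ w a)
    (hw1 : ∑ a : Equiv.Perm (Fin m), w a = 1) :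
    (momentMatrix c w).det ≤ (M0 m c).det ∧
      ((momentMatrix c w).det = (M0 m c).det → momentMatrix c w = M0 m c) := by
  have hu : IsUnit (M0 m c).det := hpd.det_pos.ne'.isUnit
  have hd : ∀ a, x c a ⬝ᵥ ((M0 m c)⁻¹ *ᵥ x c a) = x c 1 ⬝ᵥ ((M0 m c)⁻¹ *ᵥ x c 1) := fun a => by
    simpa using d_inv c a 1 hu
  have hps : (momentMatrix c w).PosSemidef := by
    refine Matrix.PosSemidef.of_dotProduct_mulVec_nonneg (herm c w) fun v => ?_
    rw [star_trivial, quad]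
    exact Finset.sum_nonneg fun a _ => mul_nonneg (hw0 a) (sq_nonneg _)
  refine amgm _ _ hpd hps ?_
  have h1 : ((M0 m c)⁻¹ * M0 m c).trace = x c 1 ⬝ᵥ ((M0 m c)⁻¹ *ᵥ x c 1) := by
    conv_lhs => enter [1, 2]; rw [M0]
    rw [trace_eq]
    simp_rw [hd]
    rw [← Finset.sum_mul]
    have : (Nat.factorial m : ℝ) ≠ 0 := by exact_mod_cast Nat.factorial_ne_zero m
    simp [Fintype.card_perm, this]
  rw [trace_eq]
  simp_rw [hd]
  rw [← Finset.sum_mul, hw1, one_mul, ← h1, Matrix.nonsing_inv_mul _ hu, Matrix.trace_one]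

lemma P2 (m : ℕ) (f : ℕ → ℝ) :
    ∑ p ∈ range m, ∑ q ∈ range m, (if p < q then f (q - p) else 0)
      = ∑ h ∈ Finset.Icc 1 (m - 1), ((m : ℝ) - h) * f h := by
  have h1 : ∀ h ∈ Finset.Icc 1 (m - 1), ((m : ℝ) - h) * f h = ∑ _p ∈ range (m - h), f h := by
    intro h hh
    rw [Finset.mem_Icc] at hh
    rw [Finset.sum_const, Finset.card_range, nsmul_eq_mul, Nat.cast_sub (by omega)]
  rw [Finset.sum_congr rfl h1]
  simp_rw [← Finset.sum_filter]
  rw [Finset.sum_sigma', Finset.sum_sigma']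
  refine Finset.sum_bij' (fun y _ => ⟨y.2 - y.1, y.1⟩) (fun y _ => ⟨y.2, y.2 + y.1⟩) ?_ ?_ ?_ ?_ ?_
  · rintro ⟨p, q⟩ h; simp at h ⊢; omega
  · rintro ⟨p, q⟩ h; simp at h ⊢; omega
  · rintro ⟨p, q⟩ h; simp at h ⊢; omega
  · rintro ⟨p, q⟩ h; simp at h ⊢
  · rintro ⟨p, q⟩ h; simp

lemma P3 (m : ℕ) (f : ℕ → ℕ → ℝ) :
    ∑ p ∈ range m, ∑ q ∈ range m, ∑ r ∈ range m,
        (if p < q ∧ q < r then f (q - p) (r - q) else 0)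
      = ∑ h1 ∈ Finset.Icc 1 (m - 1), ∑ h2 ∈ Finset.Icc 1 (m - 1 - h1),
          ((m : ℝ) - h1 - h2) * f h1 h2 := by
  have h1 : ∀ h1 ∈ Finset.Icc 1 (m - 1), ∀ h2 ∈ Finset.Icc 1 (m - 1 - h1),
      ((m : ℝ) - h1 - h2) * f h1 h2 = ∑ _p ∈ range (m - h1 - h2), f h1 h2 := by
    intro h1 hh h2 hh2
    rw [Finset.mem_Icc] at hh hh2
    rw [Finset.sum_const, Finset.card_range, nsmul_eq_mul, Nat.cast_sub (by omega),
      Nat.cast_sub (by omega)]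
  rw [Finset.sum_congr rfl fun a ha => Finset.sum_congr rfl (h1 a ha)]
  simp_rw [← Finset.sum_filter]
  simp_rw [Finset.sum_sigma']
  refine Finset.sum_bij' (fun y _ => ⟨y.2.1 - y.1, y.2.2 - y.2.1, y.1⟩)
    (fun y _ => ⟨y.2.2, y.2.2 + y.1, y.2.2 + y.1 + y.2.1⟩) ?_ ?_ ?_ ?_ ?_
  · rintro ⟨p, q, r⟩ h; simp at h ⊢; omega
  · rintro ⟨p, q, r⟩ h; simp at h ⊢; omega
  · rintro ⟨p, q, r⟩ h; simp at h ⊢; omega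
  · rintro ⟨p, q, r⟩ h; simp at h ⊢
  · rintro ⟨p, q, r⟩ h; simp

lemma T0 (m : ℕ) (c : ℕ → ℝ) :
    ∑ p ∈ range m, ∑ q ∈ range m, sg c p q ^ 2
      = 2 * ∑ h ∈ Finset.Icc 1 (m - 1), ((m : ℝ) - h) * c h ^ 2 := by
  have hp : ∀ p q, sg c p q ^ 2 = (if p < q then c (q - p) ^ 2 else 0)
      + (if q < p then c (p - q) ^ 2 else 0) := by
    intro p q; unfold sg
    rcases lt_trichotomy p q with h | h | h
    · simp [h, h.not_gt]
    · simp [h]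
    · simp [h, h.not_gt]
  simp_rw [hp, Finset.sum_add_distrib]
  rw [Finset.sum_comm (f := fun p q => if q < p then c (p - q) ^ 2 else 0),
    P2 m (fun h => c h ^ 2)]
  ring

lemma P3sym (m : ℕ) (f : ℕ → ℕ → ℝ) :
    ∑ p ∈ range m, ∑ q ∈ range m, ∑ r ∈ range m,
        (if p < q ∧ q < r then f (q - p) (r - q) else 0)
      = ∑ p ∈ range m, ∑ q ∈ range m, ∑ r ∈ range m,
        (if p < q ∧ q < r then f (r - q) (q - p) else 0) := by
  rw [P3 m f, P3 m fun a b => f b a]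
  simp_rw [Finset.sum_sigma']
  refine Finset.sum_bij' (fun y _ => ⟨y.2, y.1⟩) (fun y _ => ⟨y.2, y.1⟩) ?_ ?_ ?_ ?_ ?_
  · rintro ⟨p, q⟩ h; simp at h ⊢; omega
  · rintro ⟨p, q⟩ h; simp at h ⊢; omega
  · rintro ⟨p, q⟩ h; simp
  · rintro ⟨p, q⟩ h; simp
  · rintro ⟨p, q⟩ h; simp; left; ring

lemma T1 (m : ℕ) (c : ℕ → ℝ) :
    ∑ p ∈ range m, ∑ q ∈ range m, ∑ r ∈ range m, (if q = r then 0 else sg c p q * sg c p r)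
      = 2 * ∑ h1 ∈ Finset.Icc 1 (m - 1), ∑ h2 ∈ Finset.Icc 1 (m - 1 - h1),
      ((m : ℝ) - (h1 : ℝ) - (h2 : ℝ)) * c h1 * (2 * c (h1 + h2) - c h2) := by
  set F : ℕ → ℕ → ℕ → ℝ := fun p q r =>
    if p < q ∧ q < r then c (q - p) * c ((q - p) + (r - q)) else 0 with hF
  set G : ℕ → ℕ → ℕ → ℝ := fun p q r =>
    if p < q ∧ q < r then c (r - q) * c ((r - q) + (q - p)) else 0 with hG
  set H : ℕ → ℕ → ℕ → ℝ := fun p q r =>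
    if p < q ∧ q < r then c (q - p) * c (r - q) else 0 with hH
  have hp : ∀ p q r, (if q = r then 0 else sg c p q * sg c p r) =
      F p q r + F p r q + G q r p + G r q p - H q p r - H r p q := by
    intro p q r
    simp only [hF, hG, hH]; unfold sg
    by_cases hqr : q = r
    · subst hqr; simp; 
      rcases lt_trichotomy p q with h | h | h <;> simp [h, h.not_gt]
    rcases lt_trichotomy p q with h | h | h
    · rcases lt_trichotomy p r with h' | h' | h'
      · rcases lt_or_gt_of_ne hqr with h'' | h''
        · have : q - p + (r - q) = r - p := by omega
          simp [h, h', h'', h.not_gt, h'.not_gt, h''.not_gt, hqr, this]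
        · have : r - p + (q - r) = q - p := by omega
          simp [h, h', h'', h.not_gt, h'.not_gt, h''.not_gt, hqr, this]; ring
      · subst h'; simp [h, h.not_gt, hqr]
      · have h'' : r < q := by omega
        simp [h, h', h'', h.not_gt, h'.not_gt, h''.not_gt, hqr]; ring
    · subst h
      rcases lt_or_gt_of_ne hqr with h' | h' <;> simp [hqr, h', h'.not_gt]
    · rcases lt_trichotomy p r with h' | h' | h'
      · have h'' : q < r := by omega
        simp [h, h', h'', h.not_gt, h'.not_gt, h''.not_gt, hqr]
      · subst h'; simp [h, h.not_gt, hqr]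
      · rcases lt_or_gt_of_ne hqr with h'' | h''
        · have : p - r + (r - q) = p - q := by omega
          simp [h, h', h'', h.not_gt, h'.not_gt, h''.not_gt, hqr, this]; ring
        · have : p - q + (q - r) = p - r := by omega
          simp [h, h', h'', h.not_gt, h'.not_gt, h''.not_gt, hqr, this]
  have s1 : ∀ A : ℕ → ℕ → ℕ → ℝ, ∑ p ∈ range m, ∑ q ∈ range m, ∑ r ∈ range m, A p r q
      = ∑ p ∈ range m, ∑ q ∈ range m, ∑ r ∈ range m, A p q r := fun A =>
    Finset.sum_congr rfl fun p _ => Finset.sum_comm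
  have s2 : ∀ A : ℕ → ℕ → ℕ → ℝ, ∑ p ∈ range m, ∑ q ∈ range m, ∑ r ∈ range m, A q p r
      = ∑ p ∈ range m, ∑ q ∈ range m, ∑ r ∈ range m, A p q r := fun A => Finset.sum_comm
  have s3 : ∀ A : ℕ → ℕ → ℕ → ℝ, ∑ p ∈ range m, ∑ q ∈ range m, ∑ r ∈ range m, A q r p
      = ∑ p ∈ range m, ∑ q ∈ range m, ∑ r ∈ range m, A p q r := fun A => by
    rw [s2 (fun a b d => A a d b), s1]
  have s4 : ∀ A : ℕ → ℕ → ℕ → ℝ, ∑ p ∈ range m, ∑ q ∈ range m, ∑ r ∈ range m, A r q p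
      = ∑ p ∈ range m, ∑ q ∈ range m, ∑ r ∈ range m, A p q r := fun A => by
    rw [s1 (fun a b d => A b d a), s3]
  have s5 : ∀ A : ℕ → ℕ → ℕ → ℝ, ∑ p ∈ range m, ∑ q ∈ range m, ∑ r ∈ range m, A r p q
      = ∑ p ∈ range m, ∑ q ∈ range m, ∑ r ∈ range m, A p q r := fun A => by
    rw [s1 (fun a b d => A b a d), s2]
  simp_rw [hp, Finset.sum_sub_distrib, Finset.sum_add_distrib]
  rw [s1 F, s3 G, s4 G, s2 H, s5 H]
  have hGF := P3sym m (fun a b => c b * c (b + a))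
  have e1 := P3 m (fun a b => c a * c (a + b))
  have e2 := P3 m (fun a b => c a * c b)
  simp only [hF, hG, hH]
  rw [hGF, e1, e2]
  simp only [Finset.mul_sum, ← Finset.sum_add_distrib, ← Finset.sum_sub_distrib]
  refine Finset.sum_congr rfl fun a _ => Finset.sum_congr rfl fun b _ => ?_
  ring

noncomputable def K {m : ℕ} (c : ℕ → ℝ) (i j k l : Fin m) : ℝ :=
  ∑ b : Equiv.Perm (Fin m), sg c (b i) (b j) * sg c (b k) (b l)

lemma K_inv {m : ℕ} (c : ℕ → ℝ) (g : Equiv.Perm (Fin m)) (i j k l : Fin m) :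
    K c (g i) (g j) (g k) (g l) = K c i j k l :=
  Fintype.sum_equiv (Equiv.mulRight g) _ _ fun _ => rfl

lemma K_anti1 {m : ℕ} (c : ℕ → ℝ) (i j k l : Fin m) : K c j i k l = - K c i j k l := by
  unfold K
  rw [← Finset.sum_neg_distrib]
  refine Finset.sum_congr rfl fun b _ => ?_
  rw [sg_anti c (b i)]; ring

lemma K_anti2 {m : ℕ} (c : ℕ → ℝ) (i j k l : Fin m) : K c i j l k = - K c i j k l := by
  unfold K
  rw [← Finset.sum_neg_distrib]
  refine Finset.sum_congr rfl fun b _ => ?_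
  rw [sg_anti c (b k)]; ring

lemma K_zero {m : ℕ} (c : ℕ → ℝ) {i j k l : Fin m} (h1 : i ≠ k) (h2 : i ≠ l) (h3 : j ≠ k)
    (h4 : j ≠ l) : K c i j k l = 0 := by
  have := K_inv c (Equiv.swap i j) i j k l
  rw [Equiv.swap_apply_left, Equiv.swap_apply_right,
    Equiv.swap_apply_of_ne_of_ne h1.symm h3.symm, Equiv.swap_apply_of_ne_of_ne h2.symm h4.symm,
    K_anti1] at this
  linarith

lemma trans3 {m : ℕ} {i j k i' j' k' : Fin m} (h1 : i ≠ j) (h2 : i ≠ k) (h3 : j ≠ k)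
    (h1' : i' ≠ j') (h2' : i' ≠ k') (h3' : j' ≠ k') :
    ∃ g : Equiv.Perm (Fin m), g i = i' ∧ g j = j' ∧ g k = k' := by
  have inj : ∀ {a b d : Fin m}, a ≠ b → a ≠ d → b ≠ d → Function.Injective ![a, b, d] := by
    intro a b d h1 h2 h3 p q h
    fin_cases p <;> fin_cases q <;> simp_all
  obtain ⟨g, hg⟩ := (MulAction.isMultiplyPretransitive_iff.mp
    (Equiv.Perm.isMultiplyPretransitive (Fin m) 3)) ⟨_, inj h1 h2 h3⟩ ⟨_, inj h1' h2' h3'⟩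
  refine ⟨g, ?_, ?_, ?_⟩
  · simpa using DFunLike.congr_fun hg 0
  · simpa using DFunLike.congr_fun hg 1
  · simpa using DFunLike.congr_fun hg 2

lemma trans2 {m : ℕ} {i j i' j' : Fin m} (h1 : i ≠ j) (h1' : i' ≠ j') :
    ∃ g : Equiv.Perm (Fin m), g i = i' ∧ g j = j' := by
  have inj : ∀ {a b : Fin m}, a ≠ b → Function.Injective ![a, b] := by
    intro a b h1 p q h
    fin_cases p <;> fin_cases q <;> simp_all
  obtain ⟨g, hg⟩ := (MulAction.isMultiplyPretransitive_iff.mp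
    (Equiv.Perm.isMultiplyPretransitive (Fin m) 2)) ⟨_, inj h1⟩ ⟨_, inj h1'⟩
  refine ⟨g, ?_, ?_⟩
  · simpa using DFunLike.congr_fun hg 0
  · simpa using DFunLike.congr_fun hg 1

lemma sg_self (c : ℕ → ℝ) (p : ℕ) : sg c p p = 0 := by simp [sg]

lemma K_b0 {m : ℕ} (hm : 3 ≤ m) (c : ℕ → ℝ) {i j : Fin m} (hij : i ≠ j) :
    K c i j i j = (Nat.factorial m : ℝ) * b0 m c := by
  have hK : ∀ a b : Fin m, K c a b a b = K c i j i j - if a = b then K c i j i j else 0 := by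
    intro a b
    split_ifs with h
    · subst h; simp [K, sg_self]
    · obtain ⟨g, rfl, rfl⟩ := trans2 hij h
      rw [K_inv]; ring
  have h1 : ∑ a : Fin m, ∑ b : Fin m, K c a b a b = (m : ℝ) * (m - 1) * K c i j i j := by
    generalize K c i j i j = κ at hK
    simp_rw [hK, Finset.sum_sub_distrib]
    simp; ring
  have h2 : ∑ a : Fin m, ∑ b : Fin m, K c a b a b =
      Nat.factorial m * ∑ a : Fin m, ∑ b : Fin m, sg c a b ^ 2 := by
    unfold K
    simp_rw [Finset.sum_comm (s := (univ : Finset (Fin m))) (t := (univ : Finset (Equiv.Perm (Fin m))))]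
    have : ∀ g : Equiv.Perm (Fin m), ∑ a : Fin m, ∑ b : Fin m, sg c (g a) (g b) * sg c (g a) (g b)
        = ∑ a : Fin m, ∑ b : Fin m, sg c a b ^ 2 := by
      intro g
      refine Fintype.sum_equiv g _ _ fun a => ?_
      exact Fintype.sum_equiv g _ _ fun b => by ring
    simp_rw [this]
    simp [Fintype.card_perm]
  have h3 := T0 m c
  simp only [Finset.sum_range] at h3
  rw [h3, h1] at h2
  have hm' : (3 : ℝ) ≤ m := by exact_mod_cast hm
  have e1 : (m : ℝ) ≠ 0 := by linarith
  have e2 : (m : ℝ) - 1 ≠ 0 := by linarith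
  unfold b0
  field_simp
  linarith

lemma K_b1 {m : ℕ} (hm : 3 ≤ m) (c : ℕ → ℝ) {i j k : Fin m} (hij : i ≠ j) (hik : i ≠ k)
    (hjk : j ≠ k) :
    K c i j i k = (Nat.factorial m : ℝ) * b1 m c := by
  have hK : ∀ a b d : Fin m, (if b = d then 0 else K c a b a d) =
      K c i j i k - (if a = b then K c i j i k else 0) - (if a = d then K c i j i k else 0)
        - (if b = d then K c i j i k else 0)
        + (if a = b then if b = d then 2 * K c i j i k else 0 else 0) := by
    intro a b d
    by_cases hbd : b = d
    · subst hbd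
      by_cases hab : a = b
      · simp [hab]; ring
      · simp [hab]
    · by_cases hab : a = b
      · subst hab; simp [K, sg_self, hbd]
      · by_cases had : a = d
        · subst had; simp [K, sg_self, hab, hbd]
        · obtain ⟨g, rfl, rfl, rfl⟩ := trans3 hij hik hjk hab had hbd
          rw [K_inv]; simp [hbd, hab, had]
  have h1 : ∑ a : Fin m, ∑ b : Fin m, ∑ d : Fin m, (if b = d then 0 else K c a b a d)
      = (m : ℝ) * (m - 1) * (m - 2) * K c i j i k := by
    simp_rw [hK, Finset.sum_add_distrib, Finset.sum_sub_distrib]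
    have : ∑ a : Fin m, ∑ b : Fin m, ∑ d : Fin m,
        (if a = b then if b = d then 2 * K c i j i k else 0 else 0) = m * (2 * K c i j i k) := by
      have : ∀ a b : Fin m, ∑ d : Fin m, (if a = b then if b = d then 2 * K c i j i k else 0 else 0)
        = if a = b then 2 * K c i j i k else 0 := by
        intro a b; split_ifs <;> simp
      simp_rw [this]; simp
    rw [this]
    simp; ring
  have h2 : ∑ a : Fin m, ∑ b : Fin m, ∑ d : Fin m, (if b = d then 0 else K c a b a d) =
      Nat.factorial m * ∑ a : Fin m, ∑ b : Fin m, ∑ d : Fin m,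
        (if (b : ℕ) = d then 0 else sg c a b * sg c a d) := by
    have e : ∀ a b d : Fin m, (if b = d then 0 else K c a b a d) =
        ∑ g : Equiv.Perm (Fin m), if b = d then 0 else sg c (g a) (g b) * sg c (g a) (g d) := by
      intro a b d; unfold K; split_ifs <;> simp
    simp_rw [e]
    simp_rw [Finset.sum_comm (s := (univ : Finset (Fin m))) (t := (univ : Finset (Equiv.Perm (Fin m))))]
    have : ∀ g : Equiv.Perm (Fin m), ∑ a : Fin m, ∑ b : Fin m, ∑ d : Fin m,
        (if b = d then 0 else sg c (g a) (g b) * sg c (g a) (g d))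
        = ∑ a : Fin m, ∑ b : Fin m, ∑ d : Fin m,
        (if (b : ℕ) = d then 0 else sg c a b * sg c a d) := by
      intro g
      refine Fintype.sum_equiv g _ _ fun a => ?_
      refine Fintype.sum_equiv g _ _ fun b => ?_
      refine Fintype.sum_equiv g _ _ fun d => ?_
      simp [← Fin.ext_iff]
    simp_rw [this]
    simp [Fintype.card_perm]
  have h3 := T1 m c
  simp only [Finset.sum_range] at h3
  rw [h3, h1] at h2
  have hm' : (3 : ℝ) ≤ m := by exact_mod_cast hm
  have e1 : (m : ℝ) ≠ 0 := by linarith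
  have e2 : (m : ℝ) - 1 ≠ 0 := by linarith
  have e3 : (m : ℝ) - 2 ≠ 0 := by linarith
  unfold b1
  field_simp
  linarith

lemma K_formula {m : ℕ} (hm : 3 ≤ m) (c : ℕ → ℝ) (i j k l : Fin m) :
    K c i j k l = (Nat.factorial m : ℝ) * b1 m c *
        ((if i = k then 1 else 0) + (if j = l then 1 else 0) - (if i = l then 1 else 0)
          - (if j = k then 1 else 0))
      + (Nat.factorial m : ℝ) * (b0 m c - 2 * b1 m c) *
        ((if i = k then if j = l then 1 else 0 else 0)
          - (if i = l then if j = k then 1 else 0 else 0)) := by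
  by_cases hij : i = j
  · subst hij
    have : K c i i k l = 0 := by simp [K, sg_self]
    rw [this]
    split_ifs <;> simp
  by_cases hkl : k = l
  · subst hkl
    have : K c i j k k = 0 := by simp [K, sg_self]
    rw [this]
    split_ifs <;> simp
  by_cases hik : i = k
  · subst hik
    by_cases hjl : j = l
    · subst hjl
      rw [K_b0 hm c hij]; simp [hij, Ne.symm hij]; ring
    · rw [K_b1 hm c hij hkl hjl]; simp [hij, hjl, hkl, Ne.symm hij]
  by_cases hil : i = l
  · subst hil
    by_cases hjk : j = k
    · subst hjk
      rw [K_anti2, K_b0 hm c hij]; simp [hij, Ne.symm hij]; ring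
    · rw [K_anti2, K_b1 hm c hij hik hjk]; simp [hij, hjk, hik, Ne.symm hij]
  by_cases hjk : j = k
  · subst hjk
    rw [K_anti1, K_b1 hm c (Ne.symm hij) hkl hil]; simp [hij, hkl, hil]
  by_cases hjl : j = l
  · subst hjl
    rw [K_anti1, K_anti2, K_b1 hm c (Ne.symm hij) hjk hik]; simp [hij, hjk, hik]
  · rw [K_zero c hik hil hjk hjl]; simp [hik, hil, hjk, hjl]

lemma sum_pairs {m : ℕ} (F : Fin m → Fin m → ℝ) (hs : ∀ i j, F i j = F j i)
    (h0 : ∀ i, F i i = 0) : ∑ i, ∑ j, F i j = 2 * ∑ p : Pairs m, F p.1.1 p.1.2 := by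
  have h : ∀ i j, F i j = (if i < j then F i j else 0) + (if j < i then F j i else 0) := by
    intro i j
    rcases lt_trichotomy i j with h | h | h
    · simp [h, h.not_gt]
    · simp [h, h0]
    · simp [h, h.not_gt, hs i j]
  have h1 : ∑ i, ∑ j, F i j = 2 * ∑ i, ∑ j, (if i < j then F i j else 0) := by
    rw [Finset.sum_congr rfl fun i _ => Finset.sum_congr rfl fun j _ => h i j]
    simp_rw [Finset.sum_add_distrib]
    rw [Finset.sum_comm (f := fun i j => if j < i then F j i else 0)]
    ring
  rw [h1, ← Fintype.sum_prod_type' (f := fun i j => if i < j then F i j else 0),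
    ← Finset.sum_filter]
  congr 1
  exact Finset.sum_subtype _ (by simp) (fun q : Fin m × Fin m => F q.1 q.2)

lemma row_bound {m : ℕ} (hm : 3 ≤ m) (U : Fin m → Fin m → ℝ) (hU : ∀ i j, U j i = - U i j) :
    2 * ∑ i, (∑ j, U i j) ^ 2 ≤ m * ∑ i, ∑ j, U i j ^ 2 := by
  obtain ⟨r, hr⟩ : ∃ r : Fin m → ℝ, ∀ i, r i = ∑ j, U i j := ⟨_, fun _ => rfl⟩
  have hc : ∀ j, ∑ i, U i j = - r j := by
    intro j; rw [hr, ← Finset.sum_neg_distrib]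
    exact Finset.sum_congr rfl fun i _ => hU j i
  have hr0 : ∑ i, r i = 0 := by
    have : ∑ i, r i = - ∑ i, r i := by
      conv_lhs => simp only [hr]
      rw [Finset.sum_comm]
      simp_rw [hc]; rw [Finset.sum_neg_distrib]
    linarith
  simp_rw [← hr]
  have hm' : (3 : ℝ) ≤ m := by exact_mod_cast hm
  have h0 : 0 ≤ ∑ i, ∑ j, (m * U i j - (r i - r j)) ^ 2 :=
    Finset.sum_nonneg fun i _ => Finset.sum_nonneg fun j _ => sq_nonneg _
  have h1 : ∀ i j, (m * U i j - (r i - r j)) ^ 2 =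
      (m : ℝ) ^ 2 * U i j ^ 2 - 2 * m * (r i * U i j) + 2 * m * (r j * U i j)
        + r i ^ 2 + r j ^ 2 - 2 * (r i * r j) := by intro i j; ring
  have e1 : ∑ i, ∑ j, r i * U i j = ∑ i, r i ^ 2 := by
    refine Finset.sum_congr rfl fun i _ => ?_
    rw [← Finset.mul_sum, ← hr]; ring
  have e2 : ∑ i, ∑ j, r j * U i j = - ∑ i, r i ^ 2 := by
    rw [Finset.sum_comm, ← Finset.sum_neg_distrib]
    refine Finset.sum_congr rfl fun i _ => ?_
    rw [← Finset.mul_sum, hc]; ring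
  have e3 : ∑ i, ∑ j, r i * r j = 0 := by
    simp_rw [← Finset.mul_sum, hr0]; simp
  simp_rw [h1, Finset.sum_sub_distrib, Finset.sum_add_distrib, Finset.sum_sub_distrib,
    ← Finset.mul_sum] at h0
  simp_rw [← Finset.mul_sum] at e1 e2 e3
  rw [e1, e2, e3] at h0
  simp [← Finset.mul_sum] at h0
  nlinarith

lemma quadK {m : ℕ} (hm : 3 ≤ m) (c : ℕ → ℝ) (U : Fin m → Fin m → ℝ)
    (hU : ∀ i j, U j i = - U i j) :
    ∑ b : Equiv.Perm (Fin m), (∑ i, ∑ j, U i j * sg c (b i) (b j)) ^ 2 =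
      4 * (Nat.factorial m * b1 m c) * ∑ i, (∑ j, U i j) ^ 2 +
      2 * (Nat.factorial m * (b0 m c - 2 * b1 m c)) * ∑ i, ∑ j, U i j ^ 2 := by
  obtain ⟨r, hr⟩ : ∃ r : Fin m → ℝ, ∀ i, r i = ∑ j, U i j := ⟨_, fun _ => rfl⟩
  have hc : ∀ j, ∑ i, U i j = - r j := by
    intro j; rw [hr, ← Finset.sum_neg_distrib]
    exact Finset.sum_congr rfl fun i _ => hU j i
  have h1 : ∑ b : Equiv.Perm (Fin m), (∑ i, ∑ j, U i j * sg c (b i) (b j)) ^ 2 =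
      ∑ i, ∑ j, U i j * ∑ k, ∑ l, U k l * K c i j k l := by
    have : ∀ b : Equiv.Perm (Fin m), (∑ i, ∑ j, U i j * sg c (b i) (b j)) ^ 2 =
        ∑ i, ∑ j, ∑ k, ∑ l, U i j * (U k l * (sg c (b i) (b j) * sg c (b k) (b l))) := by
      intro b
      rw [sq, Finset.sum_mul]
      refine Finset.sum_congr rfl fun i _ => ?_
      rw [Finset.sum_mul]
      refine Finset.sum_congr rfl fun j _ => ?_
      rw [Finset.mul_sum]
      refine Finset.sum_congr rfl fun k _ => ?_
      rw [Finset.mul_sum]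
      refine Finset.sum_congr rfl fun l _ => ?_
      ring
    simp_rw [this]
    rw [Finset.sum_comm]
    refine Finset.sum_congr rfl fun i _ => ?_
    rw [Finset.sum_comm]
    refine Finset.sum_congr rfl fun j _ => ?_
    rw [Finset.sum_comm, Finset.mul_sum]
    refine Finset.sum_congr rfl fun k _ => ?_
    rw [Finset.sum_comm, Finset.mul_sum]
    refine Finset.sum_congr rfl fun l _ => ?_
    rw [← Finset.mul_sum, ← Finset.mul_sum]; rfl
  have h2 : ∀ i j, ∑ k, ∑ l, U k l * K c i j k l =
      2 * (Nat.factorial m * b1 m c) * (r i - r j) +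
      2 * (Nat.factorial m * (b0 m c - 2 * b1 m c)) * U i j := by
    intro i j
    have e : ∀ k l, U k l * K c i j k l =
        (Nat.factorial m * b1 m c) * (if i = k then U k l else 0)
        + (Nat.factorial m * b1 m c) * (if j = l then U k l else 0)
        - (Nat.factorial m * b1 m c) * (if i = l then U k l else 0)
        - (Nat.factorial m * b1 m c) * (if j = k then U k l else 0)
        + (Nat.factorial m * (b0 m c - 2 * b1 m c)) *
          (if i = k then if j = l then U k l else 0 else 0)
        - (Nat.factorial m * (b0 m c - 2 * b1 m c)) *
          (if j = k then if i = l then U k l else 0 else 0) := by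
      intro k l
      rw [K_formula hm]
      split_ifs <;> ring
    have f1 : ∀ i : Fin m, ∑ k, ∑ l, (if i = k then U k l else 0) = r i := by
      intro i; rw [Finset.sum_comm]; simp [hr]
    have f2 : ∀ j : Fin m, ∑ k, ∑ l, (if j = l then U k l else 0) = - r j := by
      intro j; simp [hc]
    have f3 : ∀ i j : Fin m,
        ∑ k, ∑ l, (if i = k then if j = l then U k l else 0 else 0) = U i j := by
      intro i j; rw [Finset.sum_comm]; simp
    simp_rw [e, Finset.sum_sub_distrib, Finset.sum_add_distrib, Finset.sum_sub_distrib,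
      Finset.sum_add_distrib, ← Finset.mul_sum]
    rw [f1, f1, f2, f2, f3, f3, hU i j]
    ring
  have e1 : ∑ i, ∑ j, U i j * r i = ∑ i, r i ^ 2 := by
    refine Finset.sum_congr rfl fun i _ => ?_
    rw [← Finset.sum_mul, ← hr]; ring
  have e2 : ∑ i, ∑ j, U i j * r j = - ∑ i, r i ^ 2 := by
    rw [Finset.sum_comm, ← Finset.sum_neg_distrib]
    refine Finset.sum_congr rfl fun i _ => ?_
    rw [← Finset.sum_mul, hc]; ring
  rw [h1]
  simp_rw [h2, ← hr]
  have h3 : ∀ i j, U i j * (2 * (Nat.factorial m * b1 m c) * (r i - r j) +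
      2 * (Nat.factorial m * (b0 m c - 2 * b1 m c)) * U i j) =
      2 * (Nat.factorial m * b1 m c) * (U i j * r i) - 2 * (Nat.factorial m * b1 m c) * (U i j * r j)
      + 2 * (Nat.factorial m * (b0 m c - 2 * b1 m c)) * U i j ^ 2 := by intro i j; ring
  simp_rw [h3, Finset.sum_add_distrib, Finset.sum_sub_distrib]
  have g1 : ∀ (α : ℝ) (f : Fin m → Fin m → ℝ), ∑ i, ∑ j, α * f i j = α * ∑ i, ∑ j, f i j := by
    intro α f; simp_rw [Finset.mul_sum]
  rw [g1, g1, g1, e1, e2]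
  ring

lemma sum_sg {m : ℕ} (c : ℕ → ℝ) (i j : Fin m) :
    ∑ b : Equiv.Perm (Fin m), sg c (b i) (b j) = 0 := by
  have : ∑ b : Equiv.Perm (Fin m), sg c (b i) (b j) = ∑ b : Equiv.Perm (Fin m), sg c (b j) (b i) :=
    Fintype.sum_equiv (Equiv.mulRight (Equiv.swap i j)) _ _ fun b => by simp
  have h2 : ∑ b : Equiv.Perm (Fin m), sg c (b j) (b i) = - ∑ b : Equiv.Perm (Fin m), sg c (b i) (b j) := by
    rw [← Finset.sum_neg_distrib]
    exact Finset.sum_congr rfl fun b _ => sg_anti c _ _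
  linarith

lemma M0_posDef {m : ℕ} (hm : 3 ≤ m) (c : ℕ → ℝ)
    (hpos1 : 0 < b0 m c - 2 * b1 m c)
    (hpos2 : 0 < b0 m c + ((m : ℝ) - 2) * b1 m c) : (M0 m c).PosDef := by
  refine Matrix.PosDef.of_dotProduct_mulVec_pos (herm c _) fun v hv => ?_
  have hN : (0 : ℝ) < Nat.factorial m := by exact_mod_cast Nat.factorial_pos m
  rw [star_trivial, M0, quad, ← Finset.mul_sum]
  refine mul_pos (by positivity) ?_
  set t := v (Sum.inl ()) with ht
  set U : Fin m → Fin m → ℝ := fun i j => if h : i < j then v (Sum.inr ⟨(i, j), h⟩) else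
    if h : j < i then - v (Sum.inr ⟨(j, i), h⟩) else 0 with hUdef
  have hU : ∀ i j, U j i = - U i j := by
    intro i j
    simp only [hUdef]
    rcases lt_trichotomy i j with h | h | h
    · simp [h, h.not_gt]
    · simp [h]
    · simp [h, h.not_gt]
  have hU0 : ∀ i, U i i = 0 := fun i => by simp [hUdef]
  have hUp : ∀ p : Pairs m, U p.1.1 p.1.2 = v (Sum.inr p) := fun p => by
    have := p.2
    simp [hUdef, this]
  set Q : Equiv.Perm (Fin m) → ℝ := fun b => ∑ i, ∑ j, U i j * sg c (b i) (b j) with hQ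
  have hvx : ∀ a, v ⬝ᵥ x c a = t + Q a.symm / 2 := by
    intro a
    have h1 : Q a.symm = 2 * ∑ p : Pairs m, v (Sum.inr p) * z c a p := by
      simp only [hQ]
      rw [sum_pairs (fun i j => U i j * sg c (a.symm i) (a.symm j))]
      · simp_rw [hUp, z_eq]
      · intro i j; rw [hU i j, sg_anti c (a.symm i)]; ring
      · intro i; simp [sg_self]
    rw [h1]
    simp [dotProduct, x, ht]
  have hsum : ∑ a : Equiv.Perm (Fin m), (v ⬝ᵥ x c a) ^ 2 =
      ∑ b : Equiv.Perm (Fin m), (t + Q b / 2) ^ 2 := by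
    simp_rw [hvx]
    exact Fintype.sum_equiv (Equiv.inv _) _ _ fun b => rfl
  have hQ0 : ∑ b, Q b = 0 := by
    simp only [hQ]
    rw [Finset.sum_comm]
    refine Finset.sum_eq_zero fun i _ => ?_
    rw [Finset.sum_comm]
    refine Finset.sum_eq_zero fun j _ => ?_
    rw [← Finset.mul_sum, sum_sg, mul_zero]
  have hQ2 := quadK hm c U hU
  have hexp : ∑ b : Equiv.Perm (Fin m), (t + Q b / 2) ^ 2 =
      Nat.factorial m * t ^ 2 + (∑ b, Q b ^ 2) / 4 := by
    have : ∀ b, (t + Q b / 2) ^ 2 = t ^ 2 + t * Q b + Q b ^ 2 / 4 := fun b => by ring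
    simp_rw [this, Finset.sum_add_distrib, ← Finset.mul_sum, hQ0, ← Finset.sum_div]
    simp [Fintype.card_perm]
  have hb := row_bound hm U hU
  have hS := sum_pairs (fun i j => U i j ^ 2) (fun i j => by rw [hU i j]; ring)
    (fun i => by simp [hU0])
  simp only [hUp] at hS
  rw [hsum, hexp]
  have hQ2' : ∑ b, Q b ^ 2 = _ := hQ2
  rw [hQ2']
  have hR0 : 0 ≤ ∑ i, (∑ j, U i j) ^ 2 := Finset.sum_nonneg fun i _ => sq_nonneg _
  have hS0 : 0 ≤ ∑ i, ∑ j, U i j ^ 2 :=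
    Finset.sum_nonneg fun i _ => Finset.sum_nonneg fun j _ => sq_nonneg _
  generalize (∑ i, (∑ j, U i j) ^ 2) = Rr at *
  generalize hSS : (∑ i, ∑ j, U i j ^ 2) = S at *
  have hpos : 0 < t ^ 2 ∨ 0 < S := by
    by_contra hcon
    push Not at hcon
    obtain ⟨h1, h2⟩ := hcon
    apply hv
    have hz : ∑ p : Pairs m, v (Sum.inr p) ^ 2 = 0 := by linarith
    rw [Finset.sum_eq_zero_iff_of_nonneg (fun p _ => sq_nonneg _)] at hz
    funext k
    rcases k with ⟨⟩ | p
    · exact pow_eq_zero_iff (two_ne_zero) |>.mp (le_antisymm h1 (sq_nonneg _))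
    · exact pow_eq_zero_iff (two_ne_zero) |>.mp (hz p (Finset.mem_univ _))
  have key : ∃ δ : ℝ, 0 < δ ∧ δ * S ≤ b1 m c * Rr + (b0 m c - 2 * b1 m c) * S / 2 := by
    rcases le_or_gt 0 (b1 m c) with h | h
    · exact ⟨(b0 m c - 2 * b1 m c) / 2, by linarith, by nlinarith [mul_nonneg h hR0]⟩
    · exact ⟨(b0 m c + ((m : ℝ) - 2) * b1 m c) / 2, by linarith, by
        nlinarith [mul_le_mul_of_nonpos_left hb h.le]⟩
  obtain ⟨δ, hδ, hk⟩ := key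
  have e : (Nat.factorial m : ℝ) * t ^ 2 + (4 * (Nat.factorial m * b1 m c) * Rr
      + 2 * (Nat.factorial m * (b0 m c - 2 * b1 m c)) * S) / 4
      = Nat.factorial m * (t ^ 2 + (b1 m c * Rr + (b0 m c - 2 * b1 m c) * S / 2)) := by ring
  rw [e]
  refine mul_pos hN ?_
  have := mul_nonneg hδ.le hS0
  rcases hpos with h | h
  · linarith
  · have := mul_pos hδ h
    nlinarith [sq_nonneg t]

/-- Implication (iii) of Theorem 1 for the D-criterion: if `b₀ − 2b₁ > 0` and
`b₀ + (m−2)b₁ > 0`, then for every design measure `w`, `det M(w) ≤ det M₀`, and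
equality of determinants forces `M(w) = M₀`. -/
theorem statement14 {m : ℕ} (hm : 3 ≤ m) (c : ℕ → ℝ) (hc1 : c 1 = 1)
    (hmono : ∀ h : ℕ, 1 ≤ h → h + 1 ≤ m - 1 → c (h + 1) ≤ c h)
    (hlast : 0 ≤ c (m - 1))
    (hpos1 : 0 < b0 m c - 2 * b1 m c)
    (hpos2 : 0 < b0 m c + ((m : ℝ) - 2) * b1 m c)
    (w : Equiv.Perm (Fin m) → ℝ) (hw0 : ∀ a, 0 ≤ w a)
    (hw1 : ∑ a : Equiv.Perm (Fin m), w a = 1) :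
    (momentMatrix c w).det ≤ (M0 m c).det ∧
      ((momentMatrix c w).det = (M0 m c).det → momentMatrix c w = M0 m c) := by
  exact main_of_posDef c (M0_posDef hm c hpos1 hpos2) w hw0 hw1
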